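/- There exist absolute constants 0 < c ≤ C such that for every θ ∈ (0,1) and every positive integer n, c · n^{(3-θ)/2} θ^{-2} (1-θ)^{-1} ≤ ∫_{A} G(s,t,u,v) ds dt du dv ≤ C · n^{(3-θ)/2} θ^{-2} (1-θ)^{-1}, where A = { (s,t,u,v) ∈ (0,∞)⁴ : 0 < u < 1, v ≥ n^{1/2}, s ≥ n^{1/4} u^{1/2}, t ≥ 1 }. -/

import Mathlib

open MeasureTheory Set Real

/-- The integrand `G(s,t,u,v)` from the paper's computation of the completely 1-summing
norm of the identity `OH_n → ℓ^n_p`, with `θ = 2/p'`. Here `p = (s, t, u, v)`. -/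
noncomputable def G (θ : ℝ) (n : ℕ) (p : ℝ × ℝ × ℝ × ℝ) : ℝ :=
  (n : ℝ) ^ (2 : ℕ) * p.1 ^ (-1 - 2 * θ) * p.2.1 ^ (-1 - 2 * θ) *
    min (min (min ((n : ℝ)⁻¹ * p.1 ^ (4 : ℝ) * p.2.2.1 ^ (-2 : ℝ) * p.2.2.2 ^ (-2 : ℝ))
                  ((n : ℝ)⁻¹ * p.2.1 ^ (4 : ℝ)))
             (min (p.1 ^ (4 : ℝ) * p.2.2.1 ^ (-2 : ℝ)) (p.2.1 ^ (4 : ℝ) * p.2.2.2 ^ (-2 : ℝ))))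
        (min (min (p.2.2.1 ^ (-2 : ℝ) * p.2.2.2 ^ (-2 : ℝ)) (p.2.2.1 ^ (-2 : ℝ)))
             (min 1 (p.2.2.2 ^ (-2 : ℝ))))

/-- The region of integration. -/
def A (n : ℕ) : Set (ℝ × ℝ × ℝ × ℝ) :=
  {p | 0 < p.1 ∧ 0 < p.2.1 ∧ 0 < p.2.2.1 ∧ 0 < p.2.2.2 ∧ p.2.2.1 < 1 ∧ (n : ℝ) ^ ((1:ℝ)/2) ≤ p.2.2.2 ∧ (n : ℝ) ^ ((1:ℝ)/4) * p.2.2.1 ^ ((1:ℝ)/2) ≤ p.1 ∧ 1 ≤ p.2.1}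

lemma lint_Ici (a r : ℝ) (ha : 0 < a) (hr : r < -1) :
    ∫⁻ x in Ici a, ENNReal.ofReal (x ^ r) = ENNReal.ofReal (-a ^ (r + 1) / (r + 1)) := by
  rw [← integral_Ioi_rpow_of_lt hr ha, setLIntegral_congr Ioi_ae_eq_Ici.symm]
  rw [ofReal_integral_eq_lintegral_ofReal (integrableOn_Ioi_rpow_of_lt hr ha)]
  exact (ae_restrict_iff' measurableSet_Ioi).2 (ae_of_all _ fun x hx =>
    rpow_nonneg (ha.trans hx).le _)

lemma lint_Ioo (r : ℝ) (hr : -1 < r) :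
    ∫⁻ x in Ioo (0:ℝ) 1, ENNReal.ofReal (x ^ r) = ENNReal.ofReal (1 / (r + 1)) := by
  have h1 : ∫ x in Ioo (0:ℝ) 1, x ^ r = 1 / (r + 1) := by
    rw [← integral_Ioc_eq_integral_Ioo, ← intervalIntegral.integral_of_le zero_le_one,
      integral_rpow (Or.inl hr), one_rpow, zero_rpow (by linarith)]
    simp
  have h2 : IntegrableOn (fun x : ℝ => x ^ r) (Ioo 0 1) := by
    have := intervalIntegral.intervalIntegrable_rpow' (a := 0) (b := 1) hr
    rw [intervalIntegrable_iff_integrableOn_Ioo_of_le zero_le_one] at this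
    exact this
  rw [← h1, ofReal_integral_eq_lintegral_ofReal h2]
  exact (ae_restrict_iff' measurableSet_Ioo).2 (ae_of_all _ fun x hx =>
    rpow_nonneg hx.1.le _)

lemma G_eq (θ : ℝ) (n : ℕ) (hn : 0 < n) (p : ℝ × ℝ × ℝ × ℝ) (hp : p ∈ A n) :
    G θ n p = (n : ℝ) ^ (2 : ℕ) * p.1 ^ (-1 - 2 * θ) * p.2.1 ^ (-1 - 2 * θ) *
      p.2.2.2 ^ (-2 : ℝ) := by
  obtain ⟨s, t, u, v⟩ := p
  obtain ⟨hs, ht, hu, hv, hu1, hnv, hns, ht1⟩ := hp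
  simp only at *
  unfold G
  simp only
  congr 1
  have hn1 : (1:ℝ) ≤ n := by exact_mod_cast hn
  have hn0 : (0:ℝ) < n := by linarith
  have hv1 : 1 ≤ v := (one_le_rpow hn1 (by norm_num)).trans hnv
  have ht4 : 1 ≤ t ^ (4:ℝ) := one_le_rpow ht1 (by norm_num)
  have hu2 : 1 ≤ u ^ (-2:ℝ) := one_le_rpow_of_pos_of_le_one_of_nonpos hu hu1.le (by norm_num)
  have hv2 : v ^ (-2:ℝ) ≤ 1 := rpow_le_one_of_one_le_of_nonpos hv1 (by norm_num)
  have hv0 : 0 < v ^ (-2:ℝ) := rpow_pos_of_pos hv _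
  have hvn : v ^ (-2:ℝ) ≤ (n:ℝ)⁻¹ := by
    have := rpow_le_rpow_of_nonpos (z := -2) (rpow_pos_of_pos hn0 _) hnv (by norm_num)
    rw [← rpow_mul hn0.le] at this
    rwa [show (1:ℝ)/2 * -2 = -1 by norm_num, rpow_neg_one] at this
  have hs4 : (n:ℝ) ≤ s ^ (4:ℝ) * u ^ (-2:ℝ) := by
    have := rpow_le_rpow (z := 4) (by positivity) hns (by norm_num)
    rw [mul_rpow (by positivity) (by positivity), ← rpow_mul hn0.le, ← rpow_mul hu.le] at this
    norm_num at this
    have h3 : u ^ (-2:ℝ) = (u^2)⁻¹ := by rw [rpow_neg hu.le]; norm_num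
    rw [h3, ← div_eq_mul_inv, le_div_iff₀ (by positivity)]
    exact_mod_cast this
  apply le_antisymm
  · exact (min_le_right _ _).trans ((min_le_right _ _).trans (min_le_right _ _))
  · refine le_min (le_min (le_min ?_ ?_) (le_min ?_ ?_)) (le_min (le_min ?_ ?_) (le_min ?_ ?_))
    · have : 1 ≤ (n:ℝ)⁻¹ * (s ^ (4:ℝ) * u ^ (-2:ℝ)) := by
        rw [inv_mul_eq_div, le_div_iff₀ hn0]; linarith
      calc v ^ (-2:ℝ) ≤ (n:ℝ)⁻¹ * (s ^ (4:ℝ) * u ^ (-2:ℝ)) * v ^ (-2:ℝ) :=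
            le_mul_of_one_le_left hv0.le this
        _ = _ := by ring
    · exact hvn.trans (le_mul_of_one_le_right (by positivity) ht4)
    · linarith
    · exact le_mul_of_one_le_left hv0.le ht4
    · exact le_mul_of_one_le_left hv0.le hu2
    · linarith
    · exact hv2
    · exact le_rfl

lemma meas_A (n : ℕ) : MeasurableSet (A n) := by
  unfold A
  simp only [setOf_and]
  repeat' apply MeasurableSet.inter
  all_goals first
    | exact measurableSet_lt (by fun_prop) (by fun_prop)
    | exact measurableSet_le (by fun_prop) (by fun_prop)

lemma main_lint (θ : ℝ) (h0 : 0 < θ) (h1 : θ < 1) (n : ℕ) (hn : 0 < n) :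
    ∫⁻ p in A n, ENNReal.ofReal (G θ n p) =
      ENNReal.ofReal (1 / 4 * ((n : ℝ) ^ ((3 - θ) / 2) * θ ^ (-2 : ℝ) * (1 - θ) ^ (-1 : ℝ))) := by
  have hn0 : (0:ℝ) < n := by exact_mod_cast hn
  rw [← lintegral_indicator (meas_A n)]
  let T : ℝ → ENNReal := (Ici (1:ℝ)).indicator fun t => ENNReal.ofReal (t ^ (-1 - 2 * θ))
  let V : ℝ → ENNReal := (Ici ((n:ℝ) ^ ((1:ℝ)/2))).indicator fun v => ENNReal.ofReal (v ^ (-2:ℝ))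
  let S : ℝ → ℝ → ENNReal := fun u => (Ici ((n : ℝ) ^ ((1:ℝ)/4) * u ^ ((1:ℝ)/2))).indicator
    fun s => ENNReal.ofReal (s ^ (-1 - 2 * θ))
  let U : ℝ → ENNReal := (Ioo (0:ℝ) 1).indicator fun u => ENNReal.ofReal (u ^ (-θ))
  let U0 : ℝ → ENNReal := (Ioo (0:ℝ) 1).indicator fun u => 1
  have hT : Measurable T := Measurable.indicator (by fun_prop) measurableSet_Ici
  have hV : Measurable V := Measurable.indicator (by fun_prop) measurableSet_Ici
  have hU : Measurable U := Measurable.indicator (by fun_prop) measurableSet_Ioo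
  have hS : ∀ u, Measurable (S u) := fun u =>
    Measurable.indicator (by fun_prop) measurableSet_Ici
  have hGm : Measurable (G θ n) := by unfold G; fun_prop
  have hpt : ∀ s t u v : ℝ, (A n).indicator (fun p => ENNReal.ofReal (G θ n p)) (s, t, u, v) =
      (ENNReal.ofReal ((n:ℝ) ^ (2:ℕ)) * (T t * (U0 u * V v))) * S u s := by
    intro s t u v
    by_cases hp : (s, t, u, v) ∈ A n
    · rw [indicator_of_mem hp, G_eq θ n hn _ hp]
      obtain ⟨hs, ht, hu, hv, hu1, hnv, hns, ht1⟩ := hp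
      simp only at *
      have e1 : T t = _ := indicator_of_mem (show t ∈ Ici (1:ℝ) from ht1) _
      have e2 : V v = _ := indicator_of_mem (show v ∈ Ici _ from hnv) _
      have e3 : S u s = _ := indicator_of_mem (show s ∈ Ici _ from hns) _
      have e4 : U0 u = _ := indicator_of_mem (show u ∈ Ioo (0:ℝ) 1 from ⟨hu, hu1⟩) _
      rw [e1, e2, e3, e4, one_mul, ← ENNReal.ofReal_mul (by positivity),
        ← ENNReal.ofReal_mul (by positivity), ← ENNReal.ofReal_mul (by positivity)]
      congr 1; ring
    · rw [indicator_of_notMem hp]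
      symm
      by_contra hne
      simp only [← ne_eq, mul_ne_zero_iff] at hne
      obtain ⟨⟨_, ht, hu, hv⟩, hs⟩ := hne
      have ht := mem_of_indicator_ne_zero ht
      have hu := mem_of_indicator_ne_zero hu
      have hv := mem_of_indicator_ne_zero hv
      have hs := mem_of_indicator_ne_zero hs
      simp only [mem_Ici, mem_Ioo] at ht hu hv hs
      have hu0 := hu.1
      exact hp ⟨lt_of_lt_of_le (by positivity) hs, by linarith, hu.1,
        lt_of_lt_of_le (by positivity) hv, hu.2, hv, hs, ht⟩
  have hSi : ∀ u ∈ Ioo (0:ℝ) 1, ∫⁻ s, S u s =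
      ENNReal.ofReal ((n:ℝ) ^ (-θ/2) / (2 * θ)) * ENNReal.ofReal (u ^ (-θ)) := by
    intro u hu
    have hu0 := hu.1
    rw [lintegral_indicator measurableSet_Ici, lint_Ici _ _ (by positivity) (by linarith),
      ← ENNReal.ofReal_mul (by positivity)]
    congr 1
    rw [mul_rpow (by positivity) (by positivity), ← rpow_mul hn0.le, ← rpow_mul hu0.le,
      show (1:ℝ)/4 * (-1 - 2*θ+1) = -θ/2 by ring, show (1:ℝ)/2 * (-1 - 2*θ+1) = -θ by ring,
      show -1 - 2*θ+1 = -(2*θ) by ring, neg_div_neg_eq]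
    ring
  rw [Measure.volume_eq_prod, lintegral_prod_symm _ 
    ((Measurable.indicator (by fun_prop) (meas_A n)).aemeasurable)]
  have hin : ∀ y : ℝ × ℝ × ℝ,
      ∫⁻ s, (A n).indicator (fun p => ENNReal.ofReal (G θ n p)) (s, y) =
      (ENNReal.ofReal ((n:ℝ) ^ (2:ℕ)) * ENNReal.ofReal ((n:ℝ) ^ (-θ/2) / (2 * θ))) *
        (T y.1 * (U y.2.1 * V y.2.2)) := by
    rintro ⟨t, u, v⟩
    simp only [hpt]
    rw [lintegral_const_mul _ (hS u)]
    by_cases hu : u ∈ Ioo (0:ℝ) 1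
    · rw [hSi u hu]
      have e4 : U0 u = _ := indicator_of_mem hu _
      have e5 : U u = _ := indicator_of_mem hu _
      rw [e4, e5]; ring
    · have e4 : U0 u = _ := indicator_of_notMem hu _
      have e5 : U u = _ := indicator_of_notMem hu _
      rw [e4, e5]; simp
  simp only [hin]
  rw [lintegral_const_mul _ (by fun_prop), Measure.volume_eq_prod,
    lintegral_prod_mul (f := T) (g := fun z : ℝ × ℝ => U z.1 * V z.2)
      hT.aemeasurable (by fun_prop), Measure.volume_eq_prod,
    lintegral_prod_mul hU.aemeasurable hV.aemeasurable,
    lintegral_indicator measurableSet_Ici, lintegral_indicator measurableSet_Ici,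
    lintegral_indicator measurableSet_Ioo, lint_Ici _ _ one_pos (by linarith),
    lint_Ici _ _ (by positivity) (by norm_num), lint_Ioo _ (by linarith)]
  have h1' : 0 < 1 - θ := by linarith
  rw [show -1 - 2*θ+1 = -(2*θ) by ring, neg_div_neg_eq, one_rpow, ← rpow_mul hn0.le,
    show -θ + 1 = 1 - θ by ring, show (-2:ℝ)+1 = -1 by norm_num, neg_div_neg_eq, div_one,
    ← ENNReal.ofReal_mul (by positivity), ← ENNReal.ofReal_mul (by positivity),
    ← ENNReal.ofReal_mul (by positivity), ← ENNReal.ofReal_mul (by positivity)]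
  congr 1
  have e : (n:ℝ) ^ ((3 - θ)/2) = (n:ℝ)^(2:ℕ) * (n:ℝ) ^ (-θ/2) * (n:ℝ) ^ ((1:ℝ)/2 * -1) := by
    rw [← rpow_natCast, ← rpow_add hn0, ← rpow_add hn0]
    congr 1; push_cast; ring
  rw [e, rpow_neg_one, rpow_neg h0.le, rpow_two]
  field_simp
  norm_num

theorem stmt_10 :
    ∃ c C : ℝ, 0 < c ∧ c ≤ C ∧ ∀ θ : ℝ, 0 < θ → θ < 1 → ∀ n : ℕ, 0 < n →
      c * ((n : ℝ) ^ ((3 - θ) / 2) * θ ^ (-2 : ℝ) * (1 - θ) ^ (-1 : ℝ)) ≤ (∫ p in A n, G θ n p) ∧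
      (∫ p in A n, G θ n p) ≤ C * ((n : ℝ) ^ ((3 - θ) / 2) * θ ^ (-2 : ℝ) * (1 - θ) ^ (-1 : ℝ)) := by
  refine ⟨1/4, 1/4, by norm_num, le_rfl, fun θ h0 h1 n hn => ?_⟩
  have hGm : Measurable (G θ n) := by unfold G; fun_prop
  have h1' : 0 < 1 - θ := by linarith
  have key : ∫ p in A n, G θ n p =
      1 / 4 * ((n : ℝ) ^ ((3 - θ) / 2) * θ ^ (-2 : ℝ) * (1 - θ) ^ (-1 : ℝ)) := by
    rw [integral_eq_lintegral_of_nonneg_ae _ hGm.aestronglyMeasurable, main_lint θ h0 h1 n hn,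
      ENNReal.toReal_ofReal (by positivity)]
    refine (ae_restrict_iff' (meas_A n)).2 (ae_of_all _ fun p hp => ?_)
    rw [G_eq θ n hn p hp]
    obtain ⟨hs, ht, hu, hv, -⟩ := hp
    simp only [Pi.zero_apply]
    positivity
  exact ⟨key.ge, key.le⟩
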